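/- Let m ≥ 2 and let N be a symmetric lattice norm on ℝ^m (functions Fin m → ℝ). Then N has property (P) or N has property (P′): either for every t > 0, N(e₁) < N(e₁ + t·e₂), or for every t > 0, N′(e₁) < N′(e₁ + t·e₂), where N′ is the dual norm of N and e₁, e₂ are standard basis vectors. -/

import Mathlib

/-- `N` is a norm on `Fin m → ℝ`. -/
def IsNorm {m : ℕ} (N : (Fin m → ℝ) → ℝ) : Prop :=
  (∀ x, N x = 0 ↔ x = 0) ∧
  (∀ (c : ℝ) (x : Fin m → ℝ), N (c • x) = |c| * N x) ∧
  (∀ x y, N (x + y) ≤ N x + N y)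

/-- `N` is a lattice norm: it depends only on coordinatewise absolute values, monotonically. -/
def IsLatticeNorm {m : ℕ} (N : (Fin m → ℝ) → ℝ) : Prop :=
  IsNorm N ∧ (∀ x, N x = N fun i => |x i|) ∧
  ∀ x y : Fin m → ℝ, (∀ i, |x i| ≤ |y i|) → N x ≤ N y

/-- `N` is a symmetric lattice norm: a lattice norm invariant under permutations. -/
def IsSymmLatticeNorm {m : ℕ} (N : (Fin m → ℝ) → ℝ) : Prop :=
  IsLatticeNorm N ∧ ∀ (π : Equiv.Perm (Fin m)) (x : Fin m → ℝ), N (x ∘ π) = N x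

/-- The dual norm `N′(y) = sup { ∑ i, x i * y i : N x ≤ 1 }`. -/
noncomputable def dualNorm {m : ℕ} (N : (Fin m → ℝ) → ℝ) (y : Fin m → ℝ) : ℝ :=
  sSup {s : ℝ | ∃ x : Fin m → ℝ, N x ≤ 1 ∧ s = ∑ i, x i * y i}

/-!
Duality pairs `e_i + t • e_j` with `e_i + s • e_j` to at least `1 + s * t`, while
`N e_i * N′ e_i ≤ 1` because `|x_i| * N e_i ≤ N x` in a lattice norm. If `N` did not grow from
`e_i` to `e_i + t • e_j`, nor `N′` from `e_i` to `e_i + s • e_j`, then Hölder's inequality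
`x ⬝ᵥ y ≤ N x * N′ y` would give `1 + s * t ≤ 1`.
-/

theorem exists_linearMap_le_of_norm_le_one {E : Type*} [AddCommGroup E] [Module ℝ E]
    [FiniteDimensional ℝ E] [Norm E] (core : NormedSpace.Core ℝ E) (f : E →ₗ[ℝ] ℝ) :
    ∃ C, ∀ x, ‖x‖ ≤ 1 → f x ≤ C := by
  let _ : NormedAddCommGroup E := .ofCore core
  let _ : NormedSpace ℝ E := .ofCore core
  let g : E →L[ℝ] ℝ := f.toContinuousLinearMap
  exact ⟨‖g‖, fun x hx => (le_abs_self _).trans (g.unit_le_opNorm x hx)⟩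

section

variable {m : ℕ} {N : (Fin m → ℝ) → ℝ}

namespace IsNorm

theorem map_zero (hN : IsNorm N) : N 0 = 0 :=
  (hN.1 0).2 rfl

theorem nonneg (hN : IsNorm N) (x : Fin m → ℝ) : 0 ≤ N x := by
  have hneg : N (-x) = N x := by simpa using hN.2.1 (-1) x
  have htri : N (x + -x) ≤ N x + N (-x) := hN.2.2 x (-x)
  rw [add_neg_cancel, hN.map_zero, hneg] at htri
  linarith

theorem pos (hN : IsNorm N) {x : Fin m → ℝ} (hx : x ≠ 0) : 0 < N x :=
  (hN.nonneg x).lt_of_ne' (mt (hN.1 x).1 hx)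

theorem bddAbove_dotProduct (hN : IsNorm N) (y : Fin m → ℝ) :
    BddAbove {s : ℝ | ∃ x : Fin m → ℝ, N x ≤ 1 ∧ s = ∑ i, x i * y i} := by
  let _ : Norm (Fin m → ℝ) := ⟨N⟩
  have core : NormedSpace.Core ℝ (Fin m → ℝ) := ⟨⟨hN.nonneg, hN.2.1, hN.2.2⟩, hN.1⟩
  obtain ⟨C, hC⟩ := exists_linearMap_le_of_norm_le_one core ((dotProductBilin ℝ ℝ).flip y)
  refine ⟨C, ?_⟩
  rintro _ ⟨x, hx, rfl⟩
  exact hC x hx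

theorem dualNorm_nonneg (hN : IsNorm N) (y : Fin m → ℝ) : 0 ≤ dualNorm N y :=
  Real.sSup_nonneg' ⟨0, ⟨0, by simp [hN.map_zero], by simp⟩, le_rfl⟩

theorem dotProduct_le_mul_dualNorm (hN : IsNorm N) (x y : Fin m → ℝ) :
    x ⬝ᵥ y ≤ N x * dualNorm N y := by
  rcases eq_or_ne x 0 with rfl | hx
  · simp [hN.map_zero]
  have hpos : 0 < N x := hN.pos hx
  have hunit : N ((N x)⁻¹ • x) ≤ 1 := by
    rw [hN.2.1, abs_of_pos (inv_pos.2 hpos), inv_mul_cancel₀ hpos.ne']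
  have hle : ((N x)⁻¹ • x) ⬝ᵥ y ≤ dualNorm N y :=
    le_csSup (hN.bddAbove_dotProduct y) ⟨_, hunit, rfl⟩
  rwa [smul_dotProduct, smul_eq_mul, inv_mul_le_iff₀ hpos] at hle

theorem lt_or_dualNorm_lt_of_mul_lt_dotProduct (hN : IsNorm N) {x x' y y' : Fin m → ℝ}
    (h : N x * dualNorm N y < x' ⬝ᵥ y') : N x < N x' ∨ dualNorm N y < dualNorm N y' := by
  by_contra! hle
  refine h.not_ge ?_
  calc x' ⬝ᵥ y' ≤ N x' * dualNorm N y' := hN.dotProduct_le_mul_dualNorm x' y'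
    _ ≤ N x * dualNorm N y :=
      mul_le_mul hle.1 hle.2 (hN.dualNorm_nonneg y') (hN.nonneg x)

end IsNorm

theorem one_add_mul_le_dotProduct_single_add_smul_single {ι : Type*} [Fintype ι] [DecidableEq ι]
    (i j : ι) {s t : ℝ} (hs : 0 ≤ s) (ht : 0 ≤ t) :
    1 + s * t ≤ (Pi.single i 1 + t • Pi.single j 1 : ι → ℝ) ⬝ᵥ
      (Pi.single i 1 + s • Pi.single j 1) := by
  have hcross : 0 ≤ (Pi.single i 1 : ι → ℝ) j :=
    (Pi.single_nonneg.2 zero_le_one : (0 : ι → ℝ) ≤ Pi.single i 1) j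
  calc 1 + s * t ≤ 1 + s * t + (s + t) * (Pi.single i 1 : ι → ℝ) j :=
        le_add_of_nonneg_right (by positivity)
    _ = _ := by
        simp only [add_dotProduct, smul_dotProduct, single_one_dotProduct, Pi.add_apply,
          Pi.smul_apply, Pi.single_eq_same, smul_eq_mul, Pi.single_comm j]
        ring

namespace IsLatticeNorm

theorem abs_apply_mul_le (hN : IsLatticeNorm N) (x : Fin m → ℝ) (i : Fin m) :
    |x i| * N (Pi.single i 1) ≤ N x := by
  rw [← hN.1.2.1]
  refine hN.2.2 _ _ fun k => ?_
  rcases eq_or_ne k i with rfl | hk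
  · simp
  · simp [hk]

theorem mul_dualNorm_single_le_one (hN : IsLatticeNorm N) (i : Fin m) :
    N (Pi.single i 1) * dualNorm N (Pi.single i 1) ≤ 1 := by
  have hpos : 0 < N (Pi.single i 1) := hN.1.pos (by simp)
  rw [← le_div_iff₀' hpos]
  refine Real.sSup_le ?_ (by positivity)
  rintro _ ⟨x, hx, rfl⟩
  rw [le_div_iff₀ hpos]
  calc (x ⬝ᵥ Pi.single i 1) * N (Pi.single i 1)
    _ = x i * N (Pi.single i 1) := by rw [dotProduct_single_one]
    _ ≤ |x i| * N (Pi.single i 1) := by gcongr; exact le_abs_self _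
    _ ≤ N x := hN.abs_apply_mul_le x i
    _ ≤ 1 := hx

end IsLatticeNorm

theorem symmetric_norm_has_property_P_or_P'_general (hN : IsLatticeNorm N) (i j : Fin m) :
    (∀ t : ℝ, 0 < t → N (Pi.single i 1) < N (Pi.single i 1 + t • Pi.single j 1)) ∨
    (∀ s : ℝ, 0 < s →
      dualNorm N (Pi.single i 1) < dualNorm N (Pi.single i 1 + s • Pi.single j 1)) := by
  by_contra! h
  obtain ⟨⟨t, ht, hNle⟩, s, hs, hdual⟩ := h
  have hlt : N (Pi.single i 1) * dualNorm N (Pi.single i 1) <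
      (Pi.single i 1 + t • Pi.single j 1) ⬝ᵥ (Pi.single i 1 + s • Pi.single j 1) :=
    calc N (Pi.single i 1) * dualNorm N (Pi.single i 1) ≤ 1 := hN.mul_dualNorm_single_le_one i
      _ < 1 + s * t := lt_add_of_pos_right 1 (mul_pos hs ht)
      _ ≤ _ := one_add_mul_le_dotProduct_single_add_smul_single i j hs.le ht.le
  exact (hN.1.lt_or_dualNorm_lt_of_mul_lt_dotProduct hlt).elim hNle.not_gt hdual.not_gt

end

/-- Every symmetric lattice norm has property (P) or property (P′). -/
theorem symmetric_norm_has_property_P_or_P'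
    {m : ℕ} (hm : 2 ≤ m) (N : (Fin m → ℝ) → ℝ)
    (hN : IsSymmLatticeNorm N) :
    (∀ t : ℝ, 0 < t →
      N (Pi.single (⟨0, by omega⟩ : Fin m) (1 : ℝ)) <
      N (Pi.single (⟨0, by omega⟩ : Fin m) (1 : ℝ) +
        t • (Pi.single (⟨1, by omega⟩ : Fin m) (1 : ℝ) : Fin m → ℝ))) ∨
    (∀ t : ℝ, 0 < t →
      dualNorm N (Pi.single (⟨0, by omega⟩ : Fin m) (1 : ℝ)) <
      dualNorm N (Pi.single (⟨0, by omega⟩ : Fin m) (1 : ℝ) +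
        t • (Pi.single (⟨1, by omega⟩ : Fin m) (1 : ℝ) : Fin m → ℝ))) := by
  exact symmetric_norm_has_property_P_or_P'_general hN.1 _ _
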